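/- Suppose that X is a separable metric space and φ : ℕ^ℕ → X is Baire measurable. Then there is a ∧-embedding π : ℕ^{<ℕ} → ℕ^{<ℕ} such that φ ∘ π̂ : ℕ^ℕ → X is constant, or φ ∘ π̂ is an injective continuous closed map from ℕ^ℕ into X, or φ ∘ π̂ extends to an injective continuous closed map from ℕ^ℕ_* into X. -/

import Mathlib

open Set Topology TopologicalSpace
open scoped ENNReal

/-- `t` is an initial segment of `b : ℕ → ℕ`. -/
def PrefixFun (t : List ℕ) (b : ℕ → ℕ) : Prop :=
  ∀ (i : ℕ) (h : i < t.length), t.get ⟨i, h⟩ = b i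

/-- The meet `s ∧ t`: the longest common initial segment of two finite sequences. -/
def listMeet : List ℕ → List ℕ → List ℕ
  | a :: s, b :: t => if a = b then a :: listMeet s t else []
  | _, _ => []

/-- A `∧`-embedding: an injection preserving meets. -/
def MeetEmbedding (π : List ℕ → List ℕ) : Prop :=
  Function.Injective π ∧ ∀ s t, π (listMeet s t) = listMeet (π s) (π t)

/-- The induced map on Baire space: `limSeq π b = ⋃ i, π (b ↾ i)`. -/
def limSeq (π : List ℕ → List ℕ) (b : ℕ → ℕ) : ℕ → ℕ := fun n =>
  (π (List.ofFn fun i : Fin (n + 1) => b i)).getD n 0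

/-- Points of the space `ℕ^{≤ℕ}_*`: finite sequences, infinite sequences, and
finite sequences followed by `∞`. -/
inductive NStar : Type
  | fin : List ℕ → NStar
  | inf : (ℕ → ℕ) → NStar
  | lim : List ℕ → NStar

namespace NStar

/-- `t ⊑ c`. -/
def PrefixOf (t : List ℕ) : NStar → Prop
  | fin s => t <+: s
  | inf b => PrefixFun t b
  | lim s => t <+: s

/-- The basic "cylinder" `N_t = {c | t ⊑ c}`. -/
def cyl (t : List ℕ) : Set NStar := {c | PrefixOf t c}

/-- The smallest topology in which every `{t}` and every `N_t` is clopen. -/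
instance : TopologicalSpace NStar :=
  TopologicalSpace.generateFrom
    {S | ∃ t : List ℕ, S = {fin t} ∨ S = ({fin t} : Set NStar)ᶜ ∨ S = cyl t ∨ S = (cyl t)ᶜ}

def IsFin (c : NStar) : Prop := ∃ t, c = fin t
def IsInf (c : NStar) : Prop := ∃ b, c = inf b
def IsLim (c : NStar) : Prop := ∃ t, c = lim t

/-- The extension of `π : ℕ^{<ℕ} → ℕ^{<ℕ}` to `ℕ^{≤ℕ}_*`. -/
def hat (π : List ℕ → List ℕ) : NStar → NStar
  | fin t => fin (π t)
  | inf b => inf (limSeq π b)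
  | lim t => lim (π t)

end NStar

/-- `ℕ^ℕ_* = ℕ^{≤ℕ}_* ∖ ℕ^{<ℕ}`. -/
abbrev NNStar : Type := {c : NStar // ¬ c.IsFin}
/-- `ℕ^ℕ_* ∖ ℕ^ℕ = {t⌢⟨∞⟩ : t ∈ ℕ^{<ℕ}}`. -/
abbrev NLim : Type := {c : NStar // c.IsLim}
/-- The copy of `ℕ^{<ℕ}` inside `ℕ^{≤ℕ}_*` (a discrete subspace). -/
abbrev NFin : Type := {c : NStar // c.IsFin}
/-- `ℕ^{≤ℕ} = ℕ^{<ℕ} ∪ ℕ^ℕ`. -/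
abbrev NFinInf : Type := {c : NStar // ¬ c.IsLim}
/-- `ℕ^{≤ℕ}_* ∖ ℕ^ℕ`. -/
abbrev NFinLim : Type := {c : NStar // ¬ c.IsInf}

def infPt (b : ℕ → ℕ) : NNStar :=
  ⟨NStar.inf b, by rintro ⟨t, h⟩; exact NStar.noConfusion h⟩

def limPt (t : List ℕ) : NLim := ⟨NStar.lim t, t, rfl⟩

def finPt (t : List ℕ) : NFin := ⟨NStar.fin t, t, rfl⟩

/-- The extension `π̂` restricted to `ℕ^ℕ_*`. -/
def hatNN (π : List ℕ → List ℕ) (c : NNStar) : NNStar :=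
  ⟨c.1.hat π, by
    obtain ⟨c, hc⟩ := c
    cases c with
    | fin t => exact fun _ => hc ⟨t, rfl⟩
    | inf b => rintro ⟨t, h⟩; exact NStar.noConfusion h
    | lim t => rintro ⟨s, h⟩; exact NStar.noConfusion h⟩

/-- The extension `π̂` restricted to `ℕ^ℕ_* ∖ ℕ^ℕ`. -/
def hatLim (π : List ℕ → List ℕ) (c : NLim) : NLim :=
  ⟨c.1.hat π, by obtain ⟨c, t, rfl⟩ := c; exact ⟨π t, rfl⟩⟩

def NLim.toNN (c : NLim) : NNStar :=
  ⟨c.1, by obtain ⟨c, t, rfl⟩ := c; rintro ⟨s, h⟩; exact NStar.noConfusion h⟩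

def NLim.base (c : NLim) : List ℕ :=
  match c.1 with
  | .lim t => t
  | .fin t => t
  | .inf _ => []

/-- The map `p : t⌢⟨∞⟩ ↦ t`, with values in the discrete copy of `ℕ^{<ℕ}`. -/
def pFin (c : NLim) : NFin := finPt c.base

def NFin.toFinLim (c : NFin) : NFinLim :=
  ⟨c.1, by obtain ⟨c, t, rfl⟩ := c; rintro ⟨b, h⟩; exact NStar.noConfusion h⟩

def NFin.toFinInf (c : NFin) : NFinInf :=
  ⟨c.1, by obtain ⟨c, t, rfl⟩ := c; rintro ⟨s, h⟩; exact NStar.noConfusion h⟩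

/-- A closed continuous embedding of `φ` into `φ'`: a pair of injective continuous closed
maps `πX : X → X'` and `πY : cl(φ[X]) → cl(φ'[X'])` with `φ' ∘ πX = πY ∘ φ`. -/
def ClosedContinuousEmbedding {X Y X' Y' : Type*} [TopologicalSpace X] [TopologicalSpace Y]
    [TopologicalSpace X'] [TopologicalSpace Y'] (φ : X → Y) (φ' : X' → Y') : Prop :=
  ∃ (πX : X → X') (πY : closure (Set.range φ) → closure (Set.range φ')),
    Continuous πX ∧ Function.Injective πX ∧ IsClosedMap πX ∧
    Continuous πY ∧ Function.Injective πY ∧ IsClosedMap πY ∧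
    ∀ x : X, φ' (πX x) = (πY ⟨φ x, subset_closure ⟨x, rfl⟩⟩ : Y')

/-- A topological space is analytic if it is a continuous image of a closed subset of `ℕ^ℕ`. -/
def IsAnalytic (X : Type*) [TopologicalSpace X] : Prop :=
  ∃ C : Set (ℕ → ℕ), IsClosed C ∧ ∃ f : C → X, Continuous f ∧ Function.Surjective f

/-- Baire measurable: preimages of open sets have the Baire property. -/
def BaireMeasurableFun {X Y : Type*} [TopologicalSpace X] [TopologicalSpace Y]
    (φ : X → Y) : Prop :=
  ∀ V : Set Y, IsOpen V → ∃ U : Set X, IsOpen U ∧ IsMeagre (symmDiff (φ ⁻¹' V) U)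

/-- Baire class one: preimages of open sets are `Fσ`. -/
def BaireClassOneFun {X Y : Type*} [TopologicalSpace X] [TopologicalSpace Y]
    (φ : X → Y) : Prop :=
  ∀ V : Set Y, IsOpen V → ∃ F : ℕ → Set X, (∀ n, IsClosed (F n)) ∧ φ ⁻¹' V = ⋃ n, F n

/-- σ-continuous with closed witnesses. -/
def SigmaContClosed {X Y : Type*} [TopologicalSpace X] [TopologicalSpace Y]
    (φ : X → Y) : Prop :=
  ∃ F : ℕ → Set X, (∀ n, IsClosed (F n)) ∧ (⋃ n, F n) = Set.univ ∧ ∀ n, ContinuousOn φ (F n)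

/-- Borel: preimages of open sets are Borel. -/
def BorelFun {X Y : Type*} [TopologicalSpace X] [TopologicalSpace Y] (φ : X → Y) : Prop :=
  ∀ V : Set Y, IsOpen V → @MeasurableSet X (borel X) (φ ⁻¹' V)

/-- The function on `ℕ^ℕ_*` agreeing with `f` on `ℕ^ℕ` and with `g` on `ℕ^ℕ_* ∖ ℕ^ℕ`,
with values in the topological disjoint union. -/
def combine2 {A B : Type*} (f : (ℕ → ℕ) → A) (g : NLim → B) : NNStar → A ⊕ B := fun c =>
  match c with
  | ⟨.fin t, h⟩ => absurd ⟨t, rfl⟩ h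
  | ⟨.inf b, _⟩ => Sum.inl (f b)
  | ⟨.lim t, _⟩ => Sum.inr (g (limPt t))

/-!
Restricting `φ` to a comeagre set on which it is continuous, and embedding `ℕ^{<ℕ}` so that `π̂`
takes its values there, one may assume that `φ` is continuous. If `φ` is constant on some cylinder,
we are done. Otherwise call `x` a fan cluster point at `s` if every neighbourhood of `x` meets the
images of infinitely many of the cylinders `N_{s⌢⟨i⟩}`.

* If nodes having a fan cluster point are dense, then below any such node, with cluster point `x`,
  one can select extensions of infinitely many children whose cylinders have images with pairwise
  disjoint closures avoiding and converging to `x`. Iterating, `φ ∘ π̂` extends to `ℕ^ℕ_*` by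
  sending `t⌢⟨∞⟩` to the point chosen at `π t`; the extension is a continuous injection from a
  compact space, hence closed.
* If no node above some `r` has a fan cluster point, one can still make the closures of the images
  disjoint. An ultrafilter on `ℕ^ℕ` either converges or concentrates on some `N_t` without
  concentrating on any `N_{t⌢⟨i⟩}`; in the latter case a limit of its image would be a fan cluster
  point at `π t`. So `φ ∘ π̂` is proper.
-/

section

open Filter Function

/-! ### Finite sequences and cylinders of Baire space -/

/-- The initial segment `b ↾ n`. -/
def initSeg (b : ℕ → ℕ) (n : ℕ) : List ℕ := List.ofFn fun i : Fin n => b i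

/-- The basic clopen set `{b | t ⊑ b}` of Baire space. -/
def baireCyl (t : List ℕ) : Set (ℕ → ℕ) := {b | PrefixFun t b}

lemma length_initSeg (b : ℕ → ℕ) (n : ℕ) : (initSeg b n).length = n := List.length_ofFn

lemma initSeg_succ (b : ℕ → ℕ) (n : ℕ) : initSeg b (n + 1) = initSeg b n ++ [b n] :=
  List.ofFn_succ_last

lemma initSeg_prefix_initSeg (b : ℕ → ℕ) {m n : ℕ} (h : m ≤ n) : initSeg b m <+: initSeg b n := by
  induction n, h using Nat.le_induction with
  | base => exact List.prefix_rfl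
  | succ n _ ih => exact initSeg_succ b n ▸ ih.trans (List.prefix_append _ _)

lemma prefixFun_initSeg (b : ℕ → ℕ) (n : ℕ) : PrefixFun (initSeg b n) b := fun i hi => by
  simp [initSeg]

namespace PrefixFun

variable {s t : List ℕ} {b : ℕ → ℕ}

lemma initSeg_length (h : PrefixFun t b) : initSeg b t.length = t :=
  List.ext_getElem (length_initSeg _ _) fun i _ hi => by simpa [initSeg] using (h i hi).symm

lemma of_prefix (h : PrefixFun t b) (hst : s <+: t) : PrefixFun s b := fun i hi =>
  (hst.getElem hi).trans (h i (hi.trans_le hst.length_le))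

lemma prefix_of_length_le (hs : PrefixFun s b) (ht : PrefixFun t b) (h : s.length ≤ t.length) :
    s <+: t := by
  rw [← hs.initSeg_length, ← ht.initSeg_length]
  exact initSeg_prefix_initSeg b h

lemma append_apply_length (h : PrefixFun t b) : PrefixFun (t ++ [b t.length]) b := by
  rw [← h.initSeg_length, length_initSeg, ← initSeg_succ]
  exact prefixFun_initSeg b _

end PrefixFun

lemma eq_of_forall_exists_prefixFun {a b : ℕ → ℕ}
    (h : ∀ n, ∃ t : List ℕ, n ≤ t.length ∧ PrefixFun t a ∧ PrefixFun t b) : a = b := by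
  funext n
  obtain ⟨t, hn, ha, hb⟩ := h (n + 1)
  rw [← ha n hn, ← hb n hn]

lemma baireCyl_nil : baireCyl [] = univ :=
  eq_univ_of_forall fun _ i hi => absurd hi i.not_lt_zero

lemma baireCyl_anti {s t : List ℕ} (h : s <+: t) : baireCyl t ⊆ baireCyl s :=
  fun _ hb => hb.of_prefix h

lemma baireCyl_nonempty (t : List ℕ) : (baireCyl t).Nonempty :=
  ⟨fun i => t.getD i 0, fun i hi => by simp [hi]⟩

lemma baireCyl_initSeg (b : ℕ → ℕ) (n : ℕ) : baireCyl (initSeg b n) = PiNat.cylinder b n := by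
  ext c
  simp [baireCyl, PrefixFun, initSeg, PiNat.mem_cylinder_iff, eq_comm]

lemma isOpen_baireCyl (t : List ℕ) : IsOpen (baireCyl t) := by
  obtain ⟨b, hb⟩ := baireCyl_nonempty t
  rw [← hb.initSeg_length, baireCyl_initSeg]
  exact PiNat.isOpen_cylinder _ b _

lemma exists_baireCyl_initSeg_subset {U : Set (ℕ → ℕ)} {b : ℕ → ℕ} (hU : U ∈ 𝓝 b) :
    ∃ n, baireCyl (initSeg b n) ⊆ U := by
  obtain ⟨_, ⟨x, n, rfl⟩, hb, hxU⟩ :=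
    (PiNat.isTopologicalBasis_cylinders fun _ : ℕ => ℕ).mem_nhds_iff.1 hU
  rw [← PiNat.mem_cylinder_iff_eq.1 hb, ← baireCyl_initSeg] at hxU
  exact ⟨n, hxU⟩

lemma exists_prefix_baireCyl_subset {U : Set (ℕ → ℕ)} {s : List ℕ} {b : ℕ → ℕ}
    (hb : b ∈ baireCyl s) (hU : U ∈ 𝓝 b) : ∃ t, s <+: t ∧ baireCyl t ⊆ U := by
  obtain ⟨n, hn⟩ := exists_baireCyl_initSeg_subset hU
  refine ⟨initSeg b (max n s.length), ?_, ?_⟩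
  · exact hb.prefix_of_length_le (prefixFun_initSeg b _) (by simp [length_initSeg])
  · exact (baireCyl_anti (initSeg_prefix_initSeg b (le_max_left _ _))).trans hn

lemma exists_terminal_or_branch {T : List ℕ → Prop} (h_nil : T []) :
    (∃ t, T t ∧ ∀ i, ¬ T (t ++ [i])) ∨ ∃ b : ℕ → ℕ, ∀ n, T (initSeg b n) := by
  by_contra! ⟨h_ext, h_branch⟩
  choose! next h_next using h_ext
  let node : ℕ → List ℕ := fun n => Nat.rec [] (fun _ t => t ++ [next t]) n
  have h_node : ∀ n, initSeg (fun k => next (node k)) n = node n := fun n => by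
    induction n with
    | zero => rfl
    | succ n ih => rw [initSeg_succ, ih]
  have hT : ∀ n, T (node n) := fun n => by
    induction n with
    | zero => exact h_nil
    | succ n ih => exact h_next _ ih
  obtain ⟨n, hn⟩ := h_branch fun k => next (node k)
  exact hn ((h_node n).symm ▸ hT n)

/-! ### Meets and branching maps -/

lemma listMeet_comm (s t : List ℕ) : listMeet s t = listMeet t s := by
  induction s generalizing t with
  | nil => cases t <;> rfl
  | cons a s ih =>
    cases t with
    | nil => rfl
    | cons b t => grind [listMeet]

lemma listMeet_prefix_left (s t : List ℕ) : listMeet s t <+: s := by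
  induction s generalizing t with
  | nil => cases t <;> exact List.prefix_rfl
  | cons a s ih =>
    cases t with
    | nil => exact List.nil_prefix
    | cons b t =>
      rw [listMeet]
      split_ifs
      · exact (List.prefix_cons_inj a).2 (ih t)
      · exact List.nil_prefix

lemma listMeet_eq_left {s t : List ℕ} (h : s <+: t) : listMeet s t = s := by
  obtain ⟨u, rfl⟩ := h
  induction s with
  | nil => cases u <;> rfl
  | cons a s ih => simp [listMeet, ih]

lemma listMeet_eq_of_ne {s t t' : List ℕ} {i j : ℕ} (hij : i ≠ j) (ht : s ++ [i] <+: t)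
    (ht' : s ++ [j] <+: t') : listMeet t t' = s := by
  obtain ⟨u, rfl⟩ := ht
  obtain ⟨v, rfl⟩ := ht'
  induction s with
  | nil => simp [listMeet, hij]
  | cons a s ih => simpa [listMeet] using ih

/-- The sequences `u i` extend pairwise distinct children of `s`. -/
def IsFan (s : List ℕ) (u : ℕ → List ℕ) : Prop :=
  ∃ n : ℕ → ℕ, Injective n ∧ ∀ i, s ++ [n i] <+: u i

/-- `π` maps the children of each `t` above pairwise distinct children of `π t`. This local
condition is the form in which `∧`-embeddings are built by recursion. -/
def IsBranching (π : List ℕ → List ℕ) : Prop := ∀ t, IsFan (π t) fun i => π (t ++ [i])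

lemma IsFan.mono {s : List ℕ} {u v : ℕ → List ℕ} (h : IsFan s u) (huv : ∀ i, u i <+: v i) :
    IsFan s v :=
  let ⟨n, hn, hu⟩ := h
  ⟨n, hn, fun i => (hu i).trans (huv i)⟩

lemma IsFan.prefix {s : List ℕ} {u : ℕ → List ℕ} (h : IsFan s u) (i : ℕ) : s <+: u i :=
  let ⟨_, _, hu⟩ := h
  (List.prefix_append _ _).trans (hu i)

namespace IsBranching

variable {π ρ : List ℕ → List ℕ}

lemma monotone (hπ : IsBranching π) {s t : List ℕ} (h : s <+: t) : π s <+: π t := by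
  obtain ⟨u, rfl⟩ := h
  induction u using List.reverseRecOn with
  | nil => simp
  | append_singleton u i ih => exact List.append_assoc s u [i] ▸ ih.trans ((hπ _).prefix i)

lemma length_add_le (hπ : IsBranching π) (s u : List ℕ) :
    (π s).length + u.length ≤ (π (s ++ u)).length := by
  induction u using List.reverseRecOn with
  | nil => simp
  | append_singleton u i ih =>
    obtain ⟨n, -, hn⟩ := hπ (s ++ u)
    have := (hn i).length_le
    simp only [List.length_append, List.length_singleton, List.append_assoc] at this ⊢
    lia

lemma length_le (hπ : IsBranching π) (t : List ℕ) : t.length ≤ (π t).length :=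
  le_of_add_le_right (hπ.length_add_le [] t)

lemma eq_of_prefix_of_eq (hπ : IsBranching π) {s t : List ℕ} (hst : s <+: t) (h : π s = π t) :
    s = t := by
  obtain ⟨u, rfl⟩ := hst
  have := hπ.length_add_le s u
  have hu : u.length = 0 := by rw [h] at this; lia
  simp [List.length_eq_zero_iff.1 hu]

lemma map_listMeet (hπ : IsBranching π) (s t : List ℕ) :
    π (listMeet s t) = listMeet (π s) (π t) := by
  induction s generalizing π t with
  | nil => rw [listMeet_eq_left List.nil_prefix, listMeet_eq_left (hπ.monotone List.nil_prefix)]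
  | cons a s ih =>
    cases t with
    | nil =>
      rw [listMeet_comm, listMeet_comm (π _), listMeet_eq_left List.nil_prefix,
        listMeet_eq_left (hπ.monotone List.nil_prefix)]
    | cons b t =>
      by_cases hab : a = b
      · subst hab
        have hπa : IsBranching fun r => π (a :: r) := fun r => hπ (a :: r)
        simpa [listMeet] using ih hπa t
      · obtain ⟨n, hn, hu⟩ := hπ []
        have above : ∀ c r, π [] ++ [n c] <+: π (c :: r) := fun c r =>
          (hu c).trans (hπ.monotone (by simp))
        simp only [listMeet, hab, if_false]
        exact (listMeet_eq_of_ne (hn.ne hab) (above a s) (above b t)).symm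

lemma meetEmbedding (hπ : IsBranching π) : MeetEmbedding π := by
  refine ⟨fun s t h => ?_, hπ.map_listMeet⟩
  have h_meet : π (listMeet s t) = π s := by
    rw [hπ.map_listMeet, ← h, listMeet_eq_left List.prefix_rfl]
  have hs := hπ.eq_of_prefix_of_eq (listMeet_prefix_left s t) h_meet
  have ht := hπ.eq_of_prefix_of_eq (listMeet_comm s t ▸ listMeet_prefix_left t s)
    (h_meet.trans h)
  exact hs.symm.trans ht

lemma comp (hπ : IsBranching π) (hρ : IsBranching ρ) : IsBranching (π ∘ ρ) := fun t => by
  obtain ⟨n, hn, hu⟩ := hρ t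
  obtain ⟨m, hm, hv⟩ := hπ (ρ t)
  exact ⟨m ∘ n, hm.comp hn, fun i => (hv (n i)).trans (hπ.monotone (hu i))⟩

lemma prefixFun_limSeq_initSeg (hπ : IsBranching π) (b : ℕ → ℕ) (n : ℕ) :
    PrefixFun (π (initSeg b n)) (limSeq π b) := by
  intro i hi
  have hlen : i < (π (initSeg b (i + 1))).length := by
    simpa [length_initSeg] using hπ.length_le (initSeg b (i + 1))
  have h_limSeq : limSeq π b i = (π (initSeg b (i + 1)))[i] := List.getD_eq_getElem _ _ hlen
  rw [h_limSeq, List.get_eq_getElem]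
  rcases le_total n (i + 1) with h | h
  · exact (hπ.monotone (initSeg_prefix_initSeg b h)).getElem hi
  · exact ((hπ.monotone (initSeg_prefix_initSeg b h)).getElem hlen).symm

lemma prefixFun_limSeq (hπ : IsBranching π) {b : ℕ → ℕ} {t : List ℕ} (h : PrefixFun t b) :
    PrefixFun (π t) (limSeq π b) :=
  h.initSeg_length ▸ hπ.prefixFun_limSeq_initSeg b _

lemma limSeq_comp (hπ : IsBranching π) (hρ : IsBranching ρ) :
    limSeq (π ∘ ρ) = limSeq π ∘ limSeq ρ := by
  refine funext fun b => eq_of_forall_exists_prefixFun fun n => ⟨π (ρ (initSeg b n)), ?_,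
    (hπ.comp hρ).prefixFun_limSeq_initSeg b n,
    hπ.prefixFun_limSeq (hρ.prefixFun_limSeq_initSeg b n)⟩
  simpa only [length_initSeg, comp_apply] using (hπ.comp hρ).length_le (initSeg b n)

lemma image_comp_limSeq_subset {X : Type*} (hπ : IsBranching π) (φ : (ℕ → ℕ) → X)
    (t : List ℕ) : (φ ∘ limSeq π) '' baireCyl t ⊆ φ '' baireCyl (π t) := by
  rintro _ ⟨b, hb, rfl⟩
  exact ⟨limSeq π b, hπ.prefixFun_limSeq hb, rfl⟩

end IsBranching

lemma isBranching_append_left (s : List ℕ) : IsBranching (s ++ ·) := fun t =>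
  ⟨id, injective_id, fun i => by simp⟩

lemma continuous_limSeq (π : List ℕ → List ℕ) : Continuous (limSeq π) := by
  refine continuous_pi fun n => ?_
  have h_restrict : Continuous fun (b : ℕ → ℕ) (i : Fin (n + 1)) => b i := by fun_prop
  exact (continuous_of_discreteTopology (f := fun f => (π (List.ofFn f)).getD n 0)).comp h_restrict

lemma exists_tree_of_step {α β : Type*} {P : α → Prop} {R : α → (β → α) → Prop} {root : α}
    (h_root : P root) (step : ∀ a, P a → ∃ u : β → α, R a u ∧ ∀ i, P (u i)) :
    ∃ π : List β → α, ∀ t, P (π t) ∧ R (π t) fun i => π (t ++ [i]) := by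
  have : Nonempty α := ⟨root⟩
  choose! u hR hP using step
  have h_foldl : ∀ t : List β, P (t.foldl u root) := fun t => by
    induction t using List.reverseRecOn with
    | nil => exact h_root
    | append_singleton t i ih => simpa using hP _ ih i
  exact ⟨fun t => t.foldl u root, fun t => ⟨h_foldl t, by simpa using hR _ (h_foldl t)⟩⟩

/-! ### Reduction to continuous functions -/

lemma BaireMeasurableFun.exists_residual_continuousOn {X Y : Type*} [TopologicalSpace X]
    [TopologicalSpace Y] [SecondCountableTopology Y] {φ : X → Y} (hφ : BaireMeasurableFun φ) :
    ∃ C ∈ residual X, ContinuousOn φ C := by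
  obtain ⟨B, hB_count, -, hB⟩ := exists_countable_basis Y
  choose! U hU_open hU_meagre using fun V (hV : V ∈ B) => hφ V (hB.isOpen hV)
  refine ⟨(⋃ V ∈ B, symmDiff (φ ⁻¹' V) (U V))ᶜ, isMeagre_biUnion hB_count hU_meagre,
    hB.continuousOn_iff.2 fun V hV => ⟨U V, hU_open V hV, ?_⟩⟩
  ext b
  refine and_congr_left fun hb => ?_
  have h_notMem : b ∉ symmDiff (φ ⁻¹' V) (U V) := fun h => hb (mem_biUnion hV h)
  rw [Set.mem_symmDiff] at h_notMem
  tauto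

lemma exists_isBranching_forall_limSeq_mem {C : Set (ℕ → ℕ)} (hC : C ∈ residual (ℕ → ℕ)) :
    ∃ π, IsBranching π ∧ ∀ b, limSeq π b ∈ C := by
  obtain ⟨G, hGC, hG, hG_dense⟩ := mem_residual.1 hC
  obtain ⟨W, hW_open, rfl⟩ := hG.eq_iInter_nat
  have hW_dense : ∀ n, Dense (W n) := fun n => hG_dense.mono (iInter_subset _ _)
  have enter (s : List ℕ) (i : ℕ) :
      ∃ u, s ++ [i] <+: u ∧ baireCyl u ⊆ ⋂ j ∈ Iic s.length, W j := by
    have h_dense : Dense (⋂ j ∈ Iic s.length, W j) :=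
      dense_biInter_of_isOpen (fun j _ => hW_open j) (to_countable _) fun j _ => hW_dense j
    have h_open : IsOpen (⋂ j ∈ Iic s.length, W j) :=
      (finite_Iic _).isOpen_biInter fun j _ => hW_open j
    obtain ⟨b, hbs, hbW⟩ :=
      h_dense.inter_open_nonempty _ (isOpen_baireCyl (s ++ [i])) (baireCyl_nonempty _)
    exact exists_prefix_baireCyl_subset hbs (h_open.mem_nhds hbW)
  choose u hu_prefix huW using enter
  obtain ⟨π, hπ⟩ := exists_tree_of_step (P := fun _ => True) (root := [])
    (R := fun s v => IsFan s v ∧ ∀ i, baireCyl (v i) ⊆ ⋂ j ∈ Iic s.length, W j) trivial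
    fun s _ => ⟨u s, ⟨⟨id, injective_id, hu_prefix s⟩, huW s⟩, fun _ => trivial⟩
  have hπ_branching : IsBranching π := fun t => (hπ t).2.1
  refine ⟨π, hπ_branching, fun b => hGC (mem_iInter.2 fun n => ?_)⟩
  have h_mem : limSeq π b ∈ baireCyl (π (initSeg b n ++ [b n])) :=
    initSeg_succ b n ▸ hπ_branching.prefixFun_limSeq_initSeg b (n + 1)
  have h_len : n ≤ (π (initSeg b n)).length := by
    simpa only [length_initSeg] using hπ_branching.length_le (initSeg b n)
  exact mem_iInter₂.1 ((hπ (initSeg b n)).2.2 (b n) h_mem) n h_len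

/-! ### The space `ℕ^ℕ_*` -/

lemma NStar.cyl_anti {s t : List ℕ} (h : s <+: t) : NStar.cyl t ⊆ NStar.cyl s := by
  rintro (u | b | u) hc
  · exact h.trans hc
  · exact PrefixFun.of_prefix hc h
  · exact h.trans hc

lemma NStar.prefix_of_mem_cyl {s t : List ℕ} {c : NStar} (hs : c ∈ NStar.cyl s)
    (ht : c ∈ NStar.cyl t) (h : s.length ≤ t.length) : s <+: t := by
  rcases c with u | b | u
  · exact List.prefix_of_prefix_length_le hs ht h
  · exact PrefixFun.prefix_of_length_le hs ht h
  · exact List.prefix_of_prefix_length_le hs ht h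

namespace NNStar

/-- The trace `{c | t ⊑ c}` of the cylinder `N_t` on `ℕ^ℕ_*`. -/
def cyl (t : List ℕ) : Set NNStar := Subtype.val ⁻¹' NStar.cyl t

@[elab_as_elim]
lemma induction {motive : NNStar → Prop} (inf : ∀ b, motive (infPt b))
    (lim : ∀ t, motive (limPt t).toNN) (c : NNStar) : motive c := by
  obtain ⟨t | b | t, hc⟩ := c
  · exact absurd ⟨t, rfl⟩ hc
  · exact inf b
  · exact lim t

lemma infPt_mem_cyl {b : ℕ → ℕ} {t : List ℕ} : infPt b ∈ cyl t ↔ PrefixFun t b := Iff.rfl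

lemma limPt_mem_cyl {s t : List ℕ} : (limPt s).toNN ∈ cyl t ↔ t <+: s := Iff.rfl

lemma isClopen_cyl (t : List ℕ) : IsClopen (cyl t) := by
  refine IsClopen.preimage ⟨⟨?_⟩, ?_⟩ continuous_subtype_val
  · exact isOpen_generateFrom_of_mem ⟨t, Or.inr (Or.inr (Or.inr rfl))⟩
  · exact isOpen_generateFrom_of_mem ⟨t, Or.inr (Or.inr (Or.inl rfl))⟩

lemma cyl_nil : cyl [] = univ := by
  refine eq_univ_of_forall fun c => ?_
  induction c using NNStar.induction with
  | inf b => exact infPt_mem_cyl.2 (baireCyl_nil.ge (mem_univ b))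
  | lim t => exact List.nil_prefix

lemma eq_limPt_or_exists_mem_cyl {c : NNStar} {t : List ℕ} (h : c ∈ cyl t) :
    c = (limPt t).toNN ∨ ∃ i, c ∈ cyl (t ++ [i]) := by
  induction c using NNStar.induction with
  | inf b => exact Or.inr ⟨b t.length, PrefixFun.append_apply_length h⟩
  | lim s =>
    obtain ⟨u, rfl⟩ := limPt_mem_cyl.1 h
    cases u with
    | nil => exact Or.inl (by rw [List.append_nil])
    | cons i u => exact Or.inr ⟨i, limPt_mem_cyl.2 (by simp)⟩

lemma ext_cyl {c c' : NNStar} (h : ∀ t, c ∈ cyl t ↔ c' ∈ cyl t) : c = c' := by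
  have eq_limPt {t : List ℕ} {d : NNStar} (hd : ∀ s, s <+: t ↔ d ∈ cyl s) :
      d = (limPt t).toNN := by
    refine (eq_limPt_or_exists_mem_cyl ((hd t).1 List.prefix_rfl)).resolve_right ?_
    rintro ⟨i, hi⟩
    simpa using ((hd _).2 hi).length_le
  induction c using NNStar.induction with
  | lim t => exact (eq_limPt h).symm
  | inf b =>
    induction c' using NNStar.induction with
    | lim t => exact eq_limPt fun s => (h s).symm
    | inf b' =>
      refine congrArg infPt (eq_of_forall_exists_prefixFun fun n =>
        ⟨initSeg b n, (length_initSeg b n).ge, prefixFun_initSeg b n, ?_⟩)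
      exact (h _).1 (prefixFun_initSeg b n)

lemma le_nhds_of_forall_cyl {f : Ultrafilter NNStar} {c : NNStar}
    (h : ∀ t, cyl t ∈ f ↔ c ∈ cyl t) : (f : Filter NNStar) ≤ 𝓝 c := by
  rw [nhds_subtype_eq_comap, ← map_le_iff_le_comap, nhds_generateFrom]
  refine le_iInf₂ fun S ⟨hc, t, hS⟩ => le_principal_iff.2 (mem_map.2 ?_)
  rcases hS with rfl | rfl | rfl | rfl
  · exact absurd ⟨t, hc⟩ c.2
  · exact univ_mem' fun d hd => d.2 ⟨t, hd⟩
  · exact (h t).2 hc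
  · exact Ultrafilter.compl_mem_iff_notMem.2 fun ht => hc ((h t).1 ht)

instance : CompactSpace NNStar := by
  refine ⟨isCompact_iff_ultrafilter_le_nhds.2 fun f _ => ?_⟩
  have prefix_of_mem {s t : List ℕ} (hs : cyl s ∈ f) (ht : cyl t ∈ f)
      (hst : s.length ≤ t.length) : s <+: t :=
    let ⟨_, hcs, hct⟩ := f.nonempty_of_mem (inter_mem hs ht)
    NStar.prefix_of_mem_cyl hcs hct hst
  have mem_of_prefix {s t : List ℕ} (hst : s <+: t) (ht : cyl t ∈ f) : cyl s ∈ f :=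
    mem_of_superset ht (preimage_mono (NStar.cyl_anti hst))
  rcases exists_terminal_or_branch (T := fun t => cyl t ∈ f) (cyl_nil ▸ univ_mem) with
    ⟨t, ht, h_terminal⟩ | ⟨b, hb⟩
  · refine ⟨(limPt t).toNN, mem_univ _, le_nhds_of_forall_cyl fun s => ⟨fun hs => ?_,
      fun hs => mem_of_prefix hs ht⟩⟩
    rcases le_total s.length t.length with hst | hts
    · exact prefix_of_mem hs ht hst
    · obtain ⟨_ | ⟨i, u⟩, rfl⟩ := prefix_of_mem ht hs hts
      · simp [limPt_mem_cyl]
      · exact absurd (mem_of_prefix (by simp) hs) (h_terminal i)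
  · refine ⟨infPt b, mem_univ _, le_nhds_of_forall_cyl fun s => ⟨fun hs => ?_, fun hs => ?_⟩⟩
    · have h_prefix := prefix_of_mem hs (hb s.length) (length_initSeg b _).ge
      exact (prefixFun_initSeg b _).of_prefix h_prefix
    · exact (infPt_mem_cyl.1 hs).initSeg_length ▸ hb s.length

lemma eventually_nhds_limPt (t : List ℕ) (N : ℕ) :
    ∀ᶠ c in 𝓝 (limPt t).toNN, c = (limPt t).toNN ∨ ∃ i ≥ N, c ∈ cyl (t ++ [i]) := by
  have h_mem : ∀ᶠ c in 𝓝 (limPt t).toNN, c ∈ cyl t :=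
    (isClopen_cyl t).isOpen.mem_nhds (limPt_mem_cyl.2 List.prefix_rfl)
  have h_notMem : ∀ᶠ c in 𝓝 (limPt t).toNN, ∀ i ∈ Finset.range N, c ∉ cyl (t ++ [i]) := by
    refine (eventually_all_finset _).2 fun i _ =>
      (isClopen_cyl _).compl.isOpen.mem_nhds fun h => ?_
    simpa using (limPt_mem_cyl.1 h).length_le
  filter_upwards [h_mem, h_notMem] with c hc hcN
  refine (eq_limPt_or_exists_mem_cyl hc).imp_right fun ⟨i, hi⟩ => ⟨i, ?_, hi⟩
  by_contra! hiN
  exact hcN i (Finset.mem_range.2 hiN) hi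

end NNStar

/-! ### Extending functions from `ℕ^ℕ` to `ℕ^ℕ_*` -/

/-- The sets `A i` converge to the point `x` and have pairwise disjoint closures, none of which
contains `x`. -/
structure ConvergesDisjointly {X : Type*} [TopologicalSpace X] (A : ℕ → Set X) (x : X) : Prop where
  tendsto : Tendsto A atTop (𝓝 x).smallSets
  disjoint : Pairwise (Disjoint on fun i => closure (A i))
  notMem_closure : ∀ i, x ∉ closure (A i)

lemma ConvergesDisjointly.mono {X : Type*} [TopologicalSpace X] {A B : ℕ → Set X} {x : X}
    (h : ConvergesDisjointly A x) (hBA : ∀ i, B i ⊆ A i) : ConvergesDisjointly B x where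
  tendsto := tendsto_smallSets_iff.2 fun U hU =>
    (tendsto_smallSets_iff.1 h.tendsto U hU).mono fun i hi => (hBA i).trans hi
  disjoint _ _ hij := (h.disjoint hij).mono (closure_mono (hBA _)) (closure_mono (hBA _))
  notMem_closure i hi := h.notMem_closure i (closure_mono (hBA i) hi)

namespace NNStar

/-- The function on `ℕ^ℕ_*` that agrees with `f` on `ℕ^ℕ` and maps `t⌢⟨∞⟩` to `x t`. -/
def glue {X : Type*} (f : (ℕ → ℕ) → X) (x : List ℕ → X) : NNStar → X
  | ⟨.fin t, h⟩ => absurd ⟨t, rfl⟩ h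
  | ⟨.inf b, _⟩ => f b
  | ⟨.lim t, _⟩ => x t

variable {X : Type*} [TopologicalSpace X] {f : (ℕ → ℕ) → X} {x : List ℕ → X}

lemma glue_mem_closure
    (hx : ∀ t, Tendsto (fun i => f '' baireCyl (t ++ [i])) atTop (𝓝 (x t)).smallSets)
    {c : NNStar} {t : List ℕ} (hc : c ∈ cyl t) : glue f x c ∈ closure (f '' baireCyl t) := by
  induction c using NNStar.induction with
  | inf b => exact subset_closure ⟨b, hc, rfl⟩
  | lim s =>
    refine mem_closure_iff_nhds.2 fun U hU => ?_
    obtain ⟨i, hi⟩ := (tendsto_smallSets_iff.1 (hx s) U hU).exists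
    obtain ⟨b, hb⟩ := baireCyl_nonempty (s ++ [i])
    exact ⟨f b, hi ⟨b, hb, rfl⟩, b,
      baireCyl_anti ((limPt_mem_cyl.1 hc).trans (List.prefix_append _ _)) hb, rfl⟩

lemma continuous_glue [RegularSpace X] (hf : Continuous f)
    (hx : ∀ t, Tendsto (fun i => f '' baireCyl (t ++ [i])) atTop (𝓝 (x t)).smallSets) :
    Continuous (glue f x) := by
  refine continuous_iff_continuousAt.2 fun c =>
    (closed_nhds_basis _).tendsto_right_iff.2 fun U ⟨hU, hU_closed⟩ => ?_
  have glue_mem {c : NNStar} {t : List ℕ} (ht : f '' baireCyl t ⊆ U) (hc : c ∈ cyl t) :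
      glue f x c ∈ U := closure_minimal ht hU_closed (glue_mem_closure hx hc)
  induction c using NNStar.induction with
  | inf b =>
    obtain ⟨n, hn⟩ := exists_baireCyl_initSeg_subset (hf.continuousAt.preimage_mem_nhds hU)
    filter_upwards [(isClopen_cyl _).isOpen.mem_nhds (infPt_mem_cyl.2 (prefixFun_initSeg b n))]
      with c hc using glue_mem (image_subset_iff.2 hn) hc
  | lim t =>
    obtain ⟨N, hN⟩ := eventually_atTop.1 (tendsto_smallSets_iff.1 (hx t) U hU)
    filter_upwards [eventually_nhds_limPt t N]
    rintro c (rfl | ⟨i, hi, hc⟩)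
    · exact mem_of_mem_nhds hU
    · exact glue_mem (hN i hi) hc

lemma injective_glue (hx : ∀ t, ConvergesDisjointly (fun i => f '' baireCyl (t ++ [i])) (x t)) :
    Injective (glue f x) := by
  have glue_mem {c : NNStar} {t : List ℕ} (hc : c ∈ cyl t) :
      glue f x c ∈ closure (f '' baireCyl t) := glue_mem_closure (fun s => (hx s).tendsto) hc
  have mem_cyl_of_eq {c c' : NNStar} (h : glue f x c = glue f x c') (t : List ℕ) :
      c ∈ cyl t → c' ∈ cyl t := by
    induction t using List.reverseRecOn with
    | nil => exact fun _ => cyl_nil ▸ mem_univ c'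
    | append_singleton t i ih =>
      intro hc
      have hc_glue := h ▸ glue_mem hc
      obtain rfl | ⟨j, hj⟩ :=
        eq_limPt_or_exists_mem_cyl (ih (NStar.cyl_anti (List.prefix_append _ _) hc))
      · exact absurd hc_glue ((hx t).notMem_closure i)
      · obtain rfl : i = j := by
          by_contra hij
          exact disjoint_left.1 ((hx t).disjoint hij) hc_glue (glue_mem hj)
        exact hj
  exact fun c c' h => ext_cyl fun t => ⟨mem_cyl_of_eq h t, mem_cyl_of_eq h.symm t⟩

lemma isClosedEmbedding_glue [T3Space X] (hf : Continuous f)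
    (hx : ∀ t, ConvergesDisjointly (fun i => f '' baireCyl (t ++ [i])) (x t)) :
    IsClosedEmbedding (glue f x) :=
  (continuous_glue hf fun t => (hx t).tendsto).isClosedEmbedding (injective_glue hx)

end NNStar

/-! ### Fan cluster points -/

section FanClusterPt

variable {X : Type*} [TopologicalSpace X] {φ : (ℕ → ℕ) → X} {s : List ℕ} {x : X}

/-- Every neighbourhood of `x` meets the images of infinitely many cylinders `N_{s⌢⟨i⟩}`. Such
points serve as values at `s⌢⟨∞⟩`, and their absence makes `φ` proper. -/
def IsFanClusterPt (φ : (ℕ → ℕ) → X) (s : List ℕ) (x : X) : Prop :=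
  ∀ U ∈ 𝓝 x, ∃ᶠ i in atTop, (φ '' baireCyl (s ++ [i]) ∩ U).Nonempty

lemma IsFanClusterPt.of_comp_limSeq {π : List ℕ → List ℕ} (hπ : IsBranching π)
    (h : IsFanClusterPt (φ ∘ limSeq π) s x) : IsFanClusterPt φ (π s) x := by
  intro U hU
  obtain ⟨n, hn, hu⟩ := hπ s
  refine hn.nat_tendsto_atTop.frequently ((h U hU).mono fun i hi => hi.mono ?_)
  exact inter_subset_inter_left U
    ((hπ.image_comp_limSeq_subset φ _).trans (image_mono (baireCyl_anti (hu i))))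

lemma isProperMap_of_forall_not_isFanClusterPt [T2Space X] (hφ : Continuous φ)
    (h : ∀ t y, ¬ IsFanClusterPt φ t y) : IsProperMap φ := by
  refine isProperMap_iff_ultrafilter_of_t2.2 ⟨hφ, fun f y hy => ?_⟩
  rcases exists_terminal_or_branch (T := fun t => baireCyl t ∈ f) (baireCyl_nil ▸ univ_mem) with
    ⟨t, ht, h_terminal⟩ | ⟨b, hb⟩
  · refine absurd (fun U hU => frequently_atTop.2 fun n => ?_) (h t y)
    have h_avoid : ∀ᶠ b in f, ∀ i ∈ Finset.range n, b ∉ baireCyl (t ++ [i]) :=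
      (eventually_all_finset _).2 fun i _ => Ultrafilter.compl_mem_iff_notMem.2 (h_terminal i)
    obtain ⟨b, ⟨hbt, hb_avoid⟩, hbU⟩ := ((Filter.Eventually.and ht h_avoid).and (hy hU)).exists
    refine ⟨b t.length, ?_, φ b, ⟨b, hbt.append_apply_length, rfl⟩, hbU⟩
    by_contra! hlt
    exact hb_avoid _ (Finset.mem_range.2 hlt) hbt.append_apply_length
  · refine ⟨b, fun U hU => ?_⟩
    obtain ⟨n, hn⟩ := exists_baireCyl_initSeg_subset hU
    exact mem_of_superset (hb n) hn

lemma injective_of_disjoint_closure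
    (h : ∀ t, Pairwise (Disjoint on fun i => closure (φ '' baireCyl (t ++ [i])))) :
    Injective φ := by
  intro a b hab
  have h_initSeg (n : ℕ) : initSeg a n = initSeg b n := by
    induction n with
    | zero => rfl
    | succ n ih =>
      have mem_image (c : ℕ → ℕ) : φ c ∈ closure (φ '' baireCyl (initSeg c n ++ [c n])) :=
        subset_closure ⟨c, initSeg_succ c n ▸ prefixFun_initSeg c (n + 1), rfl⟩
      have h_eq : a n = b n := by
        by_contra hne
        exact disjoint_left.1 (h _ hne) (mem_image a) (hab ▸ ih ▸ mem_image b)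
      rw [initSeg_succ, initSeg_succ, ih, h_eq]
  exact eq_of_forall_exists_prefixFun fun n => ⟨initSeg a n, (length_initSeg a n).ge,
    prefixFun_initSeg a n, h_initSeg n ▸ prefixFun_initSeg b n⟩

variable [RegularSpace X]

lemma exists_prefix_closure_image_subset (hφ : Continuous φ) {b : ℕ → ℕ} (hb : b ∈ baireCyl s)
    {U : Set X} (hU : U ∈ 𝓝 (φ b)) : ∃ t, s <+: t ∧ closure (φ '' baireCyl t) ⊆ U := by
  obtain ⟨V, hV, hV_closed, hVU⟩ := exists_mem_nhds_isClosed_subset hU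
  obtain ⟨t, hst, ht⟩ := exists_prefix_baireCyl_subset hb (hφ.continuousAt.preimage_mem_nhds hV)
  exact ⟨t, hst, (closure_minimal (image_subset_iff.2 ht) hV_closed).trans hVU⟩

lemma IsFanClusterPt.frequently_exists_prefix [T1Space X] (hφ : Continuous φ)
    (h_nonconst : ∀ s y, ∃ b ∈ baireCyl s, φ b ≠ y) (hx : IsFanClusterPt φ s x) {U : Set X}
    (hU : U ∈ 𝓝 x) :
    ∃ᶠ i in atTop, ∃ t, s ++ [i] <+: t ∧ closure (φ '' baireCyl t) ⊆ U \ {x} := by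
  refine (hx _ (interior_mem_nhds.2 hU)).mono ?_
  rintro i ⟨_, ⟨b, hb, rfl⟩, hbU⟩
  obtain ⟨v, hv, hvU⟩ :=
    exists_prefix_closure_image_subset hφ hb (isOpen_interior.mem_nhds hbU)
  obtain ⟨b', hb', hne⟩ := h_nonconst v x
  have hb'U : φ b' ∈ interior U \ {x} := ⟨hvU (subset_closure ⟨b', hb', rfl⟩), hne⟩
  obtain ⟨t, hvt, ht⟩ := exists_prefix_closure_image_subset hφ hb'
    ((isOpen_interior.sdiff isClosed_singleton).mem_nhds hb'U)
  exact ⟨t, hv.trans hvt, ht.trans (sdiff_subset_sdiff_left interior_subset)⟩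

lemma IsFanClusterPt.exists_isFan_convergesDisjointly [T1Space X] [FirstCountableTopology X]
    (hφ : Continuous φ) (h_nonconst : ∀ s y, ∃ b ∈ baireCyl s, φ b ≠ y)
    (hx : IsFanClusterPt φ s x) :
    ∃ u, IsFan s u ∧ ConvergesDisjointly (fun i => φ '' baireCyl (u i)) x := by
  obtain ⟨V, hV⟩ := (𝓝 x).exists_antitone_basis
  let K : List ℕ → Set X := fun t => closure (φ '' baireCyl t)
  obtain ⟨a, ha, ha_lt⟩ := exists_seq_of_forall_finset_exists
    (fun a : ℕ × List ℕ => s ++ [a.1] <+: a.2 ∧ x ∉ K a.2)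
    (fun a a' => a.1 < a'.1 ∧ K a'.2 ⊆ V a.1 \ K a.2) fun S hS => by
      have h_nhds : ⋂ a ∈ S, V a.1 \ K a.2 ∈ 𝓝 x := (biInter_finset_mem S).2 fun a haS =>
        inter_mem (hV.mem a.1) (isClosed_closure.isOpen_compl.mem_nhds (hS a haS).2)
      have h_large : ∀ᶠ i in atTop, ∀ a ∈ S, a.1 < i :=
        (eventually_all_finset S).2 fun a _ => eventually_gt_atTop a.1
      obtain ⟨i, ⟨t, hit, ht⟩, hi⟩ :=
        ((hx.frequently_exists_prefix hφ h_nonconst h_nhds).and_eventually h_large).exists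
      exact ⟨(i, t), ⟨hit, fun hxt => (ht hxt).2 rfl⟩, fun a haS =>
        ⟨hi a haS, fun y hy => mem_iInter₂.1 (ht hy).1 a haS⟩⟩
  have h_mono : StrictMono fun k => (a k).1 := fun _ _ h => (ha_lt _ _ h).1
  refine ⟨fun k => (a k).2, ⟨_, h_mono.injective, fun k => (ha k).1⟩, ?_, ?_, fun k => (ha k).2⟩
  · refine tendsto_smallSets_iff.2 fun U hU => ?_
    obtain ⟨N, hN⟩ := hV.mem_iff.1 hU
    filter_upwards [eventually_gt_atTop N] with k hk
    calc φ '' baireCyl (a k).2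
      _ ⊆ V (a N).1 := subset_closure.trans ((ha_lt N k hk).2.trans sdiff_subset)
      _ ⊆ V N := hV.antitone h_mono.le_apply
      _ ⊆ U := hN
  · exact (pairwise_disjoint_on _).2 fun j k hjk =>
      disjoint_sdiff_right.mono_right (ha_lt j k hjk).2

lemma exists_isFan_pairwise_disjoint (hφ : Continuous φ) (hs : ∀ y, ¬ IsFanClusterPt φ s y) :
    ∃ u, IsFan s u ∧ Pairwise (Disjoint on fun i => closure (φ '' baireCyl (u i))) := by
  let K : List ℕ → Set X := fun t => closure (φ '' baireCyl t)
  obtain ⟨a, ha, ha_lt⟩ := exists_seq_of_forall_finset_exists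
    (fun a : ℕ × List ℕ =>
      s ++ [a.1] <+: a.2 ∧ ∀ᶠ i in atTop, Disjoint (φ '' baireCyl (s ++ [i])) (K a.2))
    (fun a a' => a.1 < a'.1 ∧ Disjoint (K a.2) (K a'.2)) fun S hS => by
      have h_disjoint : ∀ᶠ i in atTop, ∀ a ∈ S,
          a.1 < i ∧ Disjoint (φ '' baireCyl (s ++ [i])) (K a.2) :=
        (eventually_all_finset S).2 fun a haS => (eventually_gt_atTop a.1).and (hS a haS).2
      obtain ⟨i, hi⟩ := h_disjoint.exists
      obtain ⟨b, hb⟩ := baireCyl_nonempty (s ++ [i])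
      obtain ⟨U, hU, hU_avoid⟩ : ∃ U ∈ 𝓝 (φ b),
          ∀ᶠ j in atTop, ¬ (φ '' baireCyl (s ++ [j]) ∩ U).Nonempty := by
        simpa [IsFanClusterPt] using hs (φ b)
      have h_nhds : ⋂ a ∈ S, (K a.2)ᶜ ∈ 𝓝 (φ b) := (biInter_finset_mem S).2 fun a haS =>
        isClosed_closure.isOpen_compl.mem_nhds (disjoint_left.1 (hi a haS).2 ⟨b, hb, rfl⟩)
      obtain ⟨t, hit, ht⟩ := exists_prefix_closure_image_subset hφ hb (inter_mem hU h_nhds)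
      refine ⟨(i, t), ⟨hit, hU_avoid.mono fun j hj => ?_⟩, fun a haS => ⟨(hi a haS).1, ?_⟩⟩
      · exact (disjoint_iff_inter_eq_empty.2 (not_nonempty_iff_eq_empty.1 hj)).mono_right
          (ht.trans inter_subset_left)
      · exact (disjoint_left.2 fun y hy => mem_iInter₂.1 (ht hy).2 a haS).symm
  have h_mono : StrictMono fun k => (a k).1 := fun _ _ h => (ha_lt _ _ h).1
  exact ⟨fun k => (a k).2, ⟨_, h_mono.injective, fun k => (ha k).1⟩,
    (pairwise_disjoint_on _).2 fun j k hjk => (ha_lt j k hjk).2⟩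

end FanClusterPt

/-! ### The three cases for continuous functions -/

section Cases

variable {X : Type*} {φ : (ℕ → ℕ) → X}

lemma exists_isBranching_comp_limSeq_const {s : List ℕ} {x : X}
    (h : ∀ b ∈ baireCyl s, φ b = x) : ∃ π, IsBranching π ∧ ∀ b, (φ ∘ limSeq π) b = x :=
  ⟨_, isBranching_append_left s, fun b => h _ <|
    baireCyl_anti (List.prefix_append s _)
      ((isBranching_append_left s).prefixFun_limSeq_initSeg b 0)⟩

variable [TopologicalSpace X] [T3Space X]

lemma exists_isBranching_isClosedEmbedding_glue [FirstCountableTopology X] (hφ : Continuous φ)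
    (h_nonconst : ∀ s x, ∃ b ∈ baireCyl s, φ b ≠ x)
    (h_dense : ∀ s, ∃ t, s <+: t ∧ ∃ x, IsFanClusterPt φ t x) :
    ∃ π, IsBranching π ∧ ∃ x, IsClosedEmbedding (NNStar.glue (φ ∘ limSeq π) x) := by
  obtain ⟨root, -, h_root⟩ := h_dense []
  choose ext h_ext h_cluster using h_dense
  obtain ⟨π, hπ⟩ := exists_tree_of_step (P := fun s => ∃ x, IsFanClusterPt φ s x)
    (R := fun s u => IsFan s u ∧ ∃ x, ConvergesDisjointly (fun i => φ '' baireCyl (u i)) x)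
    h_root fun s ⟨x, hx⟩ => by
      obtain ⟨u, hu, hux⟩ := hx.exists_isFan_convergesDisjointly hφ h_nonconst
      exact ⟨fun i => ext (u i), ⟨hu.mono fun i => h_ext _, x,
        hux.mono fun i => image_mono (baireCyl_anti (h_ext _))⟩, fun i => h_cluster _⟩
  have hπ_branching : IsBranching π := fun t => (hπ t).2.1
  choose x hx using fun t => (hπ t).2.2
  exact ⟨π, hπ_branching, x, NNStar.isClosedEmbedding_glue (hφ.comp (continuous_limSeq π))
    fun t => (hx t).mono fun i => hπ_branching.image_comp_limSeq_subset φ _⟩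

lemma exists_isBranching_isClosedEmbedding_comp_limSeq (hφ : Continuous φ) {root : List ℕ}
    (h_root : ∀ t, root <+: t → ∀ x, ¬ IsFanClusterPt φ t x) :
    ∃ π, IsBranching π ∧ IsClosedEmbedding (φ ∘ limSeq π) := by
  obtain ⟨π, hπ⟩ := exists_tree_of_step (P := fun s => root <+: s)
    (R := fun s u => IsFan s u ∧ Pairwise (Disjoint on fun i => closure (φ '' baireCyl (u i))))
    List.prefix_rfl fun s hs => by
      obtain ⟨u, hu, hu_disjoint⟩ := exists_isFan_pairwise_disjoint hφ (h_root s hs)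
      exact ⟨u, ⟨hu, hu_disjoint⟩, fun i => hs.trans (hu.prefix i)⟩
  have hπ_branching : IsBranching π := fun t => (hπ t).2.1
  have h_cont : Continuous (φ ∘ limSeq π) := hφ.comp (continuous_limSeq π)
  have h_inj : Injective (φ ∘ limSeq π) := injective_of_disjoint_closure fun t i j hij =>
    ((hπ t).2.2 hij).mono (closure_mono (hπ_branching.image_comp_limSeq_subset φ _))
      (closure_mono (hπ_branching.image_comp_limSeq_subset φ _))
  have h_proper : IsProperMap (φ ∘ limSeq π) :=
    isProperMap_of_forall_not_isFanClusterPt h_cont fun t y hy =>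
      h_root _ (hπ t).1 y (hy.of_comp_limSeq hπ_branching)
  exact ⟨π, hπ_branching, .of_continuous_injective_isClosedMap h_cont h_inj h_proper.isClosedMap⟩

lemma exists_isBranching_trichotomy [FirstCountableTopology X] (hφ : Continuous φ) :
    ∃ π, IsBranching π ∧ ((∃ x, ∀ b, (φ ∘ limSeq π) b = x) ∨
      IsClosedEmbedding (φ ∘ limSeq π) ∨
      ∃ x, IsClosedEmbedding (NNStar.glue (φ ∘ limSeq π) x)) := by
  by_cases h_const : ∃ s x, ∀ b ∈ baireCyl s, φ b = x
  · obtain ⟨s, x, hs⟩ := h_const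
    obtain ⟨π, hπ, hx⟩ := exists_isBranching_comp_limSeq_const hs
    exact ⟨π, hπ, .inl ⟨x, hx⟩⟩
  by_cases h_dense : ∀ s, ∃ t, s <+: t ∧ ∃ x, IsFanClusterPt φ t x
  · push Not at h_const
    obtain ⟨π, hπ, hx⟩ := exists_isBranching_isClosedEmbedding_glue hφ h_const h_dense
    exact ⟨π, hπ, .inr (.inr hx)⟩
  · push Not at h_dense
    obtain ⟨root, h_root⟩ := h_dense
    obtain ⟨π, hπ, h_emb⟩ := exists_isBranching_isClosedEmbedding_comp_limSeq hφ h_root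
    exact ⟨π, hπ, .inr (.inl h_emb)⟩

end Cases

end

/-- stabilization of Baire measurable functions on Baire space. -/
theorem stmt_12 {X : Type*} [MetricSpace X] [SeparableSpace X]
    (φ : (ℕ → ℕ) → X) (h : BaireMeasurableFun φ) :
    ∃ π : List ℕ → List ℕ, MeetEmbedding π ∧
      ((∃ x, ∀ b, (φ ∘ limSeq π) b = x) ∨
        (Function.Injective (φ ∘ limSeq π) ∧ Continuous (φ ∘ limSeq π) ∧
          IsClosedMap (φ ∘ limSeq π)) ∨
        (∃ ψ : NNStar → X, Function.Injective ψ ∧ Continuous ψ ∧ IsClosedMap ψ ∧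
          ∀ b, ψ (infPt b) = (φ ∘ limSeq π) b)) := by
  have : SecondCountableTopology X := UniformSpace.secondCountable_of_separable X
  obtain ⟨C, hC, h_contOn⟩ := h.exists_residual_continuousOn
  obtain ⟨σ, hσ, hσC⟩ := exists_isBranching_forall_limSeq_mem hC
  have h_cont : Continuous (φ ∘ limSeq σ) := h_contOn.comp_continuous (continuous_limSeq σ) hσC
  obtain ⟨π, hπ, h_cases⟩ := exists_isBranching_trichotomy h_cont
  refine ⟨σ ∘ π, (hσ.comp hπ).meetEmbedding, ?_⟩
  rw [hσ.limSeq_comp hπ, ← Function.comp_assoc]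
  rcases h_cases with h_const | h_emb | ⟨x, h_emb⟩
  · exact .inl h_const
  · exact .inr (.inl ⟨h_emb.injective, h_emb.continuous, h_emb.isClosedMap⟩)
  · exact .inr (.inr ⟨_, h_emb.injective, h_emb.continuous, h_emb.isClosedMap, fun _ => rfl⟩)
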